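/- arXiv:1808.06938 — 5 statements merged into one kernel-verified Lean document; each statement's English description precedes it below -/
import Mathlib

section
/- (Hoffman–Rossi theorem, commutative case.) Let μ be a probability measure on a measurable space Ω, and let A be a subalgebra of L^∞(μ; ℂ) containing the constant function 1, which is closed in the weak* topology on L^∞(μ), i.e. the topology induced by the maps x ↦ ∫ x·f dμ for f ∈ L¹(μ; ℂ). Let φ : A → ℂ be a linear map with φ(1) = 1 and φ(xy) = φ(x)φ(y) for all x, y ∈ A, which is continuous with respect to the (relative) weak* topology on A. Then there exists g ∈ L¹(μ) with g ≥ 0 almost everywhere and ∫ g dμ = 1, such that φ(x) = ∫ x·g dμ for all x ∈ A. That is, φ has a normal state extension to L^∞(μ). -/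
open MeasureTheory

set_option synthInstance.maxHeartbeats 1000000
set_option maxHeartbeats 1000000

/-- The weak* topology on (representatives of) `L^∞(μ; ℂ)`, realized on the space of all
functions `Ω → ℂ`: the coarsest topology making each pairing `x ↦ ∫ x·f dμ` against an
integrable function `f` continuous. -/
noncomputable def weakStarTopology {Ω : Type*} [MeasurableSpace Ω] (μ : Measure Ω) :
    TopologicalSpace (Ω → ℂ) :=
  ⨅ (f : Ω → ℂ) (_ : Integrable f μ),
    TopologicalSpace.induced (fun x : Ω → ℂ => ∫ ω, x ω * f ω ∂μ) inferInstance

/-!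
A weak*-continuous `φ` is integration against some `f ∈ L¹(μ)`. Factoring `f = conj η * ξ` with
`ξ, η ∈ L²(μ)` gives `φ x = ⟪η, x ξ⟫`, where `A` acts on `L²(μ)` by multiplication. Let `K` be the
closure of `(ker φ) ξ` and `e` the component of `ξ` orthogonal to `K`; it is nonzero because
`η ⟂ K` while `⟪η, ξ⟫ = φ 1 = 1`. Since `ker φ` is an ideal, `K` is `A`-invariant, so `φ x = 0`
implies `x e = x ξ - x (ξ - e) ∈ K` and hence `⟪e, x e⟫ = 0`. Normalizing `e` to a unit vector `u`
yields `φ x = ⟪u, x u⟫ = ∫ x * |u|² dμ`.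
-/

open scoped InnerProductSpace ENNReal ComplexConjugate

section VectorState

variable {𝕜 A H : Type*} [NormedAddCommGroup H]

section NormedSpace

variable [NontriviallyNormedField 𝕜] [Semiring A] [Algebra 𝕜 A] [NormedSpace 𝕜 H]
  {π : A →ₐ[𝕜] H →L[𝕜] H} {φ : A →ₐ[𝕜] 𝕜} {ξ : H}

variable (π φ ξ) in
/-- The closure of `π(ker φ) ξ`. The part of `ξ` orthogonal to it gives a vector state that agrees
with the character `φ`. -/
noncomputable def kerOrbitClosure : Submodule 𝕜 H :=
  (φ.toLinearMap.ker.map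
    ((ContinuousLinearMap.apply 𝕜 H ξ).toLinearMap ∘ₗ π.toLinearMap)).topologicalClosure

lemma apply_mem_kerOrbitClosure {a : A} (ha : φ a = 0) : π a ξ ∈ kerOrbitClosure π φ ξ :=
  Submodule.le_topologicalClosure _ ⟨a, ha, rfl⟩

lemma kerOrbitClosure_le {S : Submodule 𝕜 H} (hS : IsClosed (S : Set H))
    (h : ∀ a, φ a = 0 → π a ξ ∈ S) : kerOrbitClosure π φ ξ ≤ S :=
  Submodule.topologicalClosure_minimal _ (Submodule.map_le_iff_le_comap.2 h) hS

lemma kerOrbitClosure_le_comap (a : A) :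
    kerOrbitClosure π φ ξ ≤ (kerOrbitClosure π φ ξ).comap (π a).toLinearMap := by
  refine kerOrbitClosure_le
    ((Submodule.isClosed_topologicalClosure _).preimage (π a).continuous) fun b hb ↦ ?_
  have hab : π (a * b) ξ ∈ kerOrbitClosure π φ ξ :=
    apply_mem_kerOrbitClosure (by rw [map_mul, hb, mul_zero])
  rwa [map_mul] at hab

end NormedSpace

variable [RCLike 𝕜] [InnerProductSpace 𝕜 H]

section Semiring

variable [Semiring A] [Algebra 𝕜 A] {π : A →ₐ[𝕜] H →L[𝕜] H} {φ : A →ₐ[𝕜] 𝕜} {ξ : H}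

lemma notMem_kerOrbitClosure {η : H} (hη : ∀ a, φ a = ⟪η, π a ξ⟫_𝕜) :
    ξ ∉ kerOrbitClosure π φ ξ := by
  intro hξ
  have hle : kerOrbitClosure π φ ξ ≤ (𝕜 ∙ η)ᗮ :=
    kerOrbitClosure_le (Submodule.isClosed_orthogonal _) fun a ha ↦
      Submodule.mem_orthogonal_singleton_iff_inner_right.2 (by rw [← hη, ha])
  have h_one : ⟪η, ξ⟫_𝕜 = 1 := by simpa using (hη 1).symm
  exact zero_ne_one <|
    (Submodule.mem_orthogonal_singleton_iff_inner_right.1 (hle hξ)).symm.trans h_one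

lemma inner_apply_eq_zero_of_mem_orthogonal {e : H} (he : e ∈ (kerOrbitClosure π φ ξ)ᗮ)
    (hξe : ξ - e ∈ kerOrbitClosure π φ ξ) {a : A} (ha : φ a = 0) : ⟪e, π a e⟫_𝕜 = 0 := by
  have hae : π a e = π a ξ - π a (ξ - e) := by simp
  refine Submodule.inner_left_of_mem_orthogonal ?_ he
  rw [hae]
  exact sub_mem (apply_mem_kerOrbitClosure ha) (kerOrbitClosure_le_comap a hξe)

end Semiring

variable [Ring A] [Algebra 𝕜 A] {π : A →ₐ[𝕜] H →L[𝕜] H} {φ : A →ₐ[𝕜] 𝕜} {ξ : H}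

lemma exists_eq_inner_self_of_inner_eq_zero {e : H} (he : e ≠ 0)
    (h : ∀ a, φ a = 0 → ⟪e, π a e⟫_𝕜 = 0) : ∃ u : H, ∀ a, φ a = ⟪u, π a u⟫_𝕜 := by
  set u : H := ((‖e‖⁻¹ : ℝ) : 𝕜) • e
  have hu : ‖u‖ = 1 := by simp [u, norm_smul, he]
  refine ⟨u, fun a ↦ ?_⟩
  have hker : ⟪u, π (a - φ a • 1) u⟫_𝕜 = 0 := by
    simp only [u, map_smul, inner_smul_left, inner_smul_right]
    rw [h _ (by simp), mul_zero, mul_zero]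
  have hsub : ⟪u, π (a - φ a • 1) u⟫_𝕜 = ⟪u, π a u⟫_𝕜 - φ a := by
    simp [inner_sub_right, inner_smul_right, hu]
  exact (sub_eq_zero.1 (hsub.symm.trans hker)).symm

theorem exists_eq_inner_self_of_eq_inner [CompleteSpace H] {η : H}
    (hη : ∀ a, φ a = ⟪η, π a ξ⟫_𝕜) : ∃ u : H, ∀ a, φ a = ⟪u, π a u⟫_𝕜 := by
  have : CompleteSpace (kerOrbitClosure π φ ξ) :=
    (Submodule.isClosed_topologicalClosure _).completeSpace_coe
  obtain ⟨p, hp, e, he, hξ⟩ := (kerOrbitClosure π φ ξ).exists_add_mem_mem_orthogonal ξ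
  have hξe : ξ - e ∈ kerOrbitClosure π φ ξ := by rwa [sub_eq_of_eq_add hξ]
  have he_ne : e ≠ 0 := fun h ↦
    notMem_kerOrbitClosure hη (by simpa only [h, sub_zero] using hξe)
  exact exists_eq_inner_self_of_inner_eq_zero he_ne fun a ha ↦
    inner_apply_eq_zero_of_mem_orthogonal he hξe ha

end VectorState

section Multiplication

variable {Ω 𝕜 : Type*} [MeasurableSpace Ω] {μ : Measure Ω}

section Lp

variable {V E : Type*} [NormedField 𝕜] [AddCommMonoid V] [Module 𝕜 V]
  [NormedAddCommGroup E] [NormedSpace 𝕜 E] {p : ℝ≥0∞}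

/-- A linear map into the `p`-integrable functions, followed by passage to classes in `L^p(μ; E)`.
A map `ι` replaces an explicit submodule of functions; for a subalgebra `A` it is `A.val`. -/
noncomputable def toLpLinearMap (ι : V →ₗ[𝕜] Ω → E) (hι : ∀ x, MemLp (ι x) p μ) :
    V →ₗ[𝕜] Lp E p μ where
  toFun x := (hι x).toLp (ι x)
  map_add' x y := by
    rw [← MemLp.toLp_add]
    exact MemLp.toLp_congr _ _ (by rw [map_add])
  map_smul' c x := by
    rw [RingHom.id_apply, ← MemLp.toLp_const_smul]
    exact MemLp.toLp_congr _ _ (by rw [map_smul])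

lemma coeFn_toLpLinearMap (ι : V →ₗ[𝕜] Ω → E) (hι : ∀ x, MemLp (ι x) p μ) (x : V) :
    toLpLinearMap ι hι x =ᵐ[μ] ι x :=
  (hι x).coeFn_toLp

end Lp

section Operator

variable [NontriviallyNormedField 𝕜] (E : Type*) [NormedAddCommGroup E] [NormedSpace 𝕜 E]
  (p : ℝ≥0∞) [Fact (1 ≤ p)]

/-- The multiplication operators on `L^p(μ; E)` by the essentially bounded functions `ι x`. -/
noncomputable def mulOperator {V : Type*} [AddCommMonoid V] [Module 𝕜 V] (ι : V →ₗ[𝕜] Ω → 𝕜)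
    (hι : ∀ x, MemLp (ι x) ∞ μ) : V →ₗ[𝕜] Lp E p μ →L[𝕜] Lp E p μ :=
  ((ContinuousLinearMap.lsmul 𝕜 𝕜).holderL μ ∞ p p).toLinearMap ∘ₗ toLpLinearMap ι hι

variable {E p} in
lemma coeFn_mulOperator {V : Type*} [AddCommMonoid V] [Module 𝕜 V] (ι : V →ₗ[𝕜] Ω → 𝕜)
    (hι : ∀ x, MemLp (ι x) ∞ μ) (x : V) (u : Lp E p μ) :
    mulOperator E p ι hι x u =ᵐ[μ] fun ω ↦ ι x ω • u ω := by
  filter_upwards [(ContinuousLinearMap.lsmul 𝕜 𝕜).coeFn_holder (r := p) (toLpLinearMap ι hι x) u,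
    coeFn_toLpLinearMap ι hι x] with ω hω hxω
  exact hω.trans (by rw [hxω, ContinuousLinearMap.lsmul_apply])

variable {A : Type*} [Semiring A] [Algebra 𝕜 A] (ι : A →ₐ[𝕜] Ω → 𝕜) (hι : ∀ x, MemLp (ι x) ∞ μ)

/-- The representation of an algebra of essentially bounded functions on `L^p(μ; E)` by
multiplication operators. -/
noncomputable def mulRep : A →ₐ[𝕜] Lp E p μ →L[𝕜] Lp E p μ :=
  AlgHom.ofLinearMap (mulOperator E p ι.toLinearMap hι)
    (by
      ext1 u
      refine Lp.ext ?_
      filter_upwards [coeFn_mulOperator ι.toLinearMap hι 1 u] with ω hω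
      simpa using hω)
    (by
      intro x y
      ext1 u
      refine Lp.ext ?_
      filter_upwards [coeFn_mulOperator ι.toLinearMap hι (x * y) u,
        coeFn_mulOperator ι.toLinearMap hι y u,
        coeFn_mulOperator ι.toLinearMap hι x (mulOperator E p ι.toLinearMap hι y u)]
        with ω hxy hy hx
      simp only [mul_apply_eq_comp, hxy, hx, hy, AlgHom.toLinearMap_apply, map_mul, Pi.mul_apply,
        mul_smul])

variable {E p} in
lemma coeFn_mulRep (x : A) (u : Lp E p μ) : mulRep E p ι hι x u =ᵐ[μ] fun ω ↦ ι x ω • u ω :=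
  coeFn_mulOperator ι.toLinearMap hι x u

end Operator

section WeakStar

variable {V : Type*} [AddCommGroup V] [Module ℂ V]

theorem exists_integrable_eq_integral_mul (ι : V →ₗ[ℂ] Ω → ℂ) (hι : ∀ x, MemLp (ι x) ∞ μ)
    (φ : V →ₗ[ℂ] ℂ) (hφ : @Continuous V ℂ ((weakStarTopology μ).induced ι) _ φ) :
    ∃ f : Ω → ℂ, Integrable f μ ∧ ∀ x, φ x = ∫ ω, ι x ω * f ω ∂μ := by
  let B : V →ₗ[ℂ] Lp ℂ 1 μ →ₗ[ℂ] ℂ :=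
    ((ContinuousLinearMap.mul ℂ ℂ).lpPairing μ ∞ 1).toLinearMap₁₂ ∘ₗ toLpLinearMap ι hι
  have hB (x : V) (f : Lp ℂ 1 μ) : B x f = ∫ ω, ι x ω * f ω ∂μ := by
    refine ((ContinuousLinearMap.mul ℂ ℂ).lpPairing_eq_integral _ f).trans (integral_congr_ae ?_)
    filter_upwards [coeFn_toLpLinearMap ι hι x] with ω hω
    rw [hω, ContinuousLinearMap.mul_apply']
  have hcont : @Continuous (WeakBilin B) (Ω → ℂ) _ (weakStarTopology μ) ι := by
    refine continuous_iInf_rng.2 fun f ↦ continuous_iInf_rng.2 fun hf ↦ continuous_induced_rng.2 ?_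
    refine (WeakBilin.eval_continuous B hf.toL1).congr fun x ↦ (hB x _).trans (integral_congr_ae ?_)
    filter_upwards [hf.coeFn_toL1] with ω hω
    rw [hω]
  obtain ⟨f, hf⟩ := LinearMap.dualEmbedding_surjective B
    ⟨φ, continuous_le_dom (continuous_iff_le_induced.1 hcont) hφ⟩
  exact ⟨f, L1.integrable_coeFn f, fun x ↦ (DFunLike.congr_fun hf x).symm.trans (hB x f)⟩

end WeakStar

section Character

variable [RCLike 𝕜] {A : Type*}

lemma inner_mulRep [Semiring A] [Algebra 𝕜 A] (ι : A →ₐ[𝕜] Ω → 𝕜) (hι : ∀ x, MemLp (ι x) ∞ μ)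
    (x : A) (u v : Lp 𝕜 2 μ) :
    ⟪v, mulRep 𝕜 2 ι hι x u⟫_𝕜 = ∫ ω, ι x ω * (conj (v ω) * u ω) ∂μ := by
  rw [L2.inner_def]
  refine integral_congr_ae ?_
  filter_upwards [coeFn_mulRep ι hι x u] with ω hω
  rw [hω, RCLike.inner_apply', smul_eq_mul, mul_left_comm]

theorem exists_memLp_two_conj_mul_eq {f : Ω → 𝕜} (hf : Integrable f μ) :
    ∃ ξ η : Ω → 𝕜, MemLp ξ 2 μ ∧ MemLp η 2 μ ∧ ∀ ω, conj (η ω) * ξ ω = f ω := by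
  have memLp_of_norm {u : Ω → 𝕜} (hu : AEStronglyMeasurable u μ)
      (hnorm : ∀ ω, ‖u ω‖ = √‖f ω‖) : MemLp u 2 μ := by
    rw [memLp_two_iff_integrable_sq_norm hu]
    simpa only [hnorm, Real.sq_sqrt (norm_nonneg _)] using hf.norm
  have hsqrt : AEMeasurable (fun ω ↦ √‖f ω‖) μ := hf.aemeasurable.norm.sqrt
  refine ⟨fun ω ↦ (√‖f ω‖ : ℝ), fun ω ↦ conj (f ω) * ((√‖f ω‖)⁻¹ : ℝ),
    memLp_of_norm ?_ fun ω ↦ ?_, memLp_of_norm ?_ fun ω ↦ ?_, fun ω ↦ ?_⟩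
  · exact (RCLike.measurable_ofReal.comp_aemeasurable hsqrt).aestronglyMeasurable
  · simp
  · exact hf.aestronglyMeasurable.star.mul
      (RCLike.measurable_ofReal.comp_aemeasurable hsqrt.inv).aestronglyMeasurable
  · simp [← div_eq_mul_inv, abs_of_nonneg (Real.sqrt_nonneg _)]
  · by_cases h : f ω = 0
    · simp [h]
    · have : ((√‖f ω‖ : ℝ) : 𝕜) ≠ 0 := by simpa using h
      simp [this]

theorem exists_density_eq_integral_mul [Ring A] [Algebra 𝕜 A] (ι : A →ₐ[𝕜] Ω → 𝕜)
    (hι : ∀ x, MemLp (ι x) ∞ μ) (φ : A →ₐ[𝕜] 𝕜) {f : Ω → 𝕜} (hf : Integrable f μ)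
    (hφ : ∀ x, φ x = ∫ ω, ι x ω * f ω ∂μ) :
    ∃ g : Ω → ℝ, Integrable g μ ∧ (∀ᵐ ω ∂μ, 0 ≤ g ω) ∧ ∫ ω, g ω ∂μ = 1 ∧
      ∀ x, φ x = ∫ ω, ι x ω * (g ω : 𝕜) ∂μ := by
  obtain ⟨ξ, η, hξ, hη, hηξ⟩ := exists_memLp_two_conj_mul_eq hf
  have hinner (x : A) : φ x = ⟪hη.toLp η, mulRep 𝕜 2 ι hι x (hξ.toLp ξ)⟫_𝕜 := by
    rw [hφ, inner_mulRep]
    refine integral_congr_ae ?_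
    filter_upwards [hξ.coeFn_toLp, hη.coeFn_toLp] with ω hξω hηω
    rw [hξω, hηω, hηξ]
  obtain ⟨u, hφu⟩ := exists_eq_inner_self_of_eq_inner hinner
  have hdensity (x : A) : φ x = ∫ ω, ι x ω * ((‖u ω‖ ^ 2 : ℝ) : 𝕜) ∂μ := by
    simp only [hφu, inner_mulRep, RCLike.conj_mul, RCLike.ofReal_pow]
  have hmass : ∫ ω, ‖u ω‖ ^ 2 ∂μ = 1 := by
    have h := hdensity 1
    simp only [map_one, Pi.one_apply, one_mul, integral_ofReal] at h
    exact_mod_cast h.symm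
  exact ⟨fun ω ↦ ‖u ω‖ ^ 2, (Lp.memLp u).integrable_norm_pow two_ne_zero,
    .of_forall fun ω ↦ sq_nonneg _, hmass, hdensity⟩

end Character

end Multiplication

theorem hoffman_rossi_commutative_general {Ω : Type*} [MeasurableSpace Ω] (μ : Measure Ω)
    (A : Subalgebra ℂ (Ω → ℂ)) (hbdd : ∀ x ∈ A, MemLp x ⊤ μ) (φ : A →ₐ[ℂ] ℂ)
    (hcont : @Continuous A ℂ
      (TopologicalSpace.induced ((↑) : A → Ω → ℂ) (weakStarTopology μ)) _ φ) :
    ∃ g : Ω → ℝ,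
      Integrable g μ ∧ (∀ᵐ ω ∂μ, 0 ≤ g ω) ∧ (∫ ω, g ω ∂μ) = 1 ∧
      ∀ x : A, φ x = ∫ ω, (x : Ω → ℂ) ω * (g ω : ℂ) ∂μ := by
  have hA (x : A) : MemLp (A.val x) ∞ μ := hbdd x x.2
  obtain ⟨f, hf, hφ⟩ := exists_integrable_eq_integral_mul A.val.toLinearMap hA φ.toLinearMap hcont
  exact exists_density_eq_integral_mul A.val hA φ hf hφ

/-- **Hoffman–Rossi theorem, commutative case.**  Let `μ` be a probability measure, `A` a unital
subalgebra of `L^∞(μ; ℂ)` (realized as a subalgebra of functions all of whose members are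
essentially bounded and measurable) which is weak*-closed (relatively, among essentially bounded
measurable functions), and `φ` a weak*-continuous character on `A`.  Then `φ` has a normal state
extension: there is an a.e. nonnegative `g ∈ L¹(μ)` of integral `1` with `φ(x) = ∫ x·g dμ`
for all `x ∈ A`. -/
theorem hoffman_rossi_commutative {Ω : Type*} [MeasurableSpace Ω] (μ : Measure Ω)
    [IsProbabilityMeasure μ]
    (A : Subalgebra ℂ (Ω → ℂ))
    (hbdd : ∀ x ∈ A, MemLp x ⊤ μ)
    (hclosed : ∀ x : Ω → ℂ, MemLp x ⊤ μ →
      x ∈ @closure _ (weakStarTopology μ) (A : Set (Ω → ℂ)) → x ∈ A)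
    (φ : A →ₗ[ℂ] ℂ)
    (hunit : φ 1 = 1)
    (hmul : ∀ x y : A, φ (x * y) = φ x * φ y)
    (hcont : @Continuous A ℂ
      (TopologicalSpace.induced ((↑) : A → Ω → ℂ) (weakStarTopology μ)) _ φ) :
    ∃ g : Ω → ℝ,
      Integrable g μ ∧ (∀ᵐ ω ∂μ, 0 ≤ g ω) ∧ (∫ ω, g ω ∂μ) = 1 ∧
      ∀ x : A, φ x = ∫ ω, (x : Ω → ℂ) ω * (g ω : ℂ) ∂μ := by
  exact hoffman_rossi_commutative_general μ A hbdd (AlgHom.ofLinearMap φ hunit hmul) hcont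
end

section
/- (Hoffman–Rossi theorem for B(H).) Let H be a complex Hilbert space and let A be a unital subalgebra of B(H) which is σ-weakly closed, in the sense that for every x ∈ B(H) with x ∉ A there exists a σ-weakly continuous linear functional on B(H) vanishing on A but not at x. Let φ : A → ℂ be linear with φ(1) = 1 and φ(ab) = φ(a)φ(b) for all a, b ∈ A, and suppose φ is σ-weakly continuous, i.e. there exist sequences (η_n), (ζ_n) in H with Σ_n ‖η_n‖² < ∞ and Σ_n ‖ζ_n‖² < ∞ such that φ(a) = Σ_n ⟨a η_n, ζ_n⟩ for all a ∈ A. Then there exists a sequence (ξ_n) in H with Σ_n ‖ξ_n‖² = 1 such that φ(a) = Σ_n ⟨a ξ_n, ξ_n⟩ for all a ∈ A. That is, φ has a normal state extension to B(H). -/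
open MeasureTheory

set_option synthInstance.maxHeartbeats 1000000
set_option maxHeartbeats 1000000

/-!
On `ℓ²(H)` the functional `φ` has the form `a ↦ ⟪ζ, a η⟫` with single vectors `η`, `ζ`. Let `N` be
the closure of `(ker φ) η`. It is invariant because `ker φ` is an ideal, and `a η - φ(a) η ∈ N`
because `a - φ(a) 1 ∈ ker φ`; so `a` acts on `η` modulo `N` as the scalar `φ(a)`, and hence so it
does on the component `ξ` of `η` orthogonal to `N`. This gives `⟪ξ, a ξ⟫ = φ(a) ‖ξ‖²`, and `ξ ≠ 0`
because `ζ ⟂ N` while `⟪ζ, η⟫ = φ(1) = 1`. Without a unit, replace `η` by `e η` where `φ(e) = 1`.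
-/

open scoped InnerProductSpace ENNReal

section InnerProductSpace

variable {𝕜 E : Type*} [RCLike 𝕜] [NormedAddCommGroup E] [InnerProductSpace 𝕜 E]

theorem inner_map_sub_starProjection_self (N : Submodule 𝕜 E) [N.HasOrthogonalProjection]
    {T : E →ₗ[𝕜] E} (hN : Set.MapsTo T N N) {c : 𝕜} {x : E} (hx : T x - c • x ∈ N) :
    ⟪x - N.starProjection x, T (x - N.starProjection x)⟫_𝕜 =
      c * (‖x - N.starProjection x‖ : 𝕜) ^ 2 := by
  set p := N.starProjection x
  have hp : p ∈ N := N.starProjection_apply_mem x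
  have hmem : T (x - p) - c • (x - p) ∈ N := by
    have hsplit : T (x - p) - c • (x - p) = (T x - c • x) - (T p - c • p) := by
      rw [map_sub, smul_sub]; abel
    exact hsplit ▸ N.sub_mem hx (N.sub_mem (hN hp) (N.smul_mem c hp))
  have horth := N.starProjection_inner_eq_zero x _ hmem
  rwa [inner_sub_right, inner_smul_right, inner_self_eq_norm_sq_to_K, sub_eq_zero] at horth

variable {R : Type*} [NonUnitalRing R] [Module 𝕜 R] (π : R →ₙₐ[𝕜] (E →L[𝕜] E))
  (φ : R →ₙₐ[𝕜] 𝕜) (η : E)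

/-- The closure of `π (ker φ) η`, for a representation `π` of an algebra on `E`, a character `φ` of
the algebra and a vector `η`. -/
noncomputable def closedKerOrbit : Submodule 𝕜 E :=
  ((LinearMap.ker (φ : R →ₗ[𝕜] 𝕜)).map
    (ContinuousLinearMap.apply 𝕜 E η ∘ₗ (π : R →ₗ[𝕜] E →L[𝕜] E))).topologicalClosure

namespace closedKerOrbit

variable {π φ η}

theorem apply_mem {a : R} (ha : φ a = 0) : π a η ∈ closedKerOrbit π φ η :=
  Submodule.le_topologicalClosure _ ⟨a, ha, rfl⟩

theorem le_of_isClosed {S : Submodule 𝕜 E} (hS : IsClosed (S : Set E))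
    (h : ∀ a, φ a = 0 → π a η ∈ S) : closedKerOrbit π φ η ≤ S := by
  refine Submodule.topologicalClosure_minimal _ ?_ hS
  rintro _ ⟨a, ha, rfl⟩
  exact h a ha

variable (π φ η)

theorem mapsTo (a : R) : Set.MapsTo (π a) (closedKerOrbit π φ η) (closedKerOrbit π φ η) := by
  let S := (closedKerOrbit π φ η).comap (π a : E →ₗ[𝕜] E)
  have hS : IsClosed (S : Set E) :=
    (Submodule.isClosed_topologicalClosure _).preimage (π a).continuous
  refine le_of_isClosed (S := S) hS fun b hb ↦ ?_
  have hab : φ (a * b) = 0 := by rw [map_mul, hb, mul_zero]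
  simpa [S] using apply_mem (π := π) (η := η) hab

theorem map_sub_smul_mem {e : R} (he : φ e = 1) (a : R) :
    π a (π e η) - φ a • π e η ∈ closedKerOrbit π φ η := by
  have hker : φ (a * e - φ a • e) = 0 := by simp [he]
  simpa using apply_mem (π := π) (η := η) hker

end closedKerOrbit

variable {π φ η}

theorem exists_norm_eq_one_forall_eq_inner [CompleteSpace E] (hφ : φ ≠ 0) {ζ : E}
    (h : ∀ a, φ a = ⟪ζ, π a η⟫_𝕜) :
    ∃ ξ : E, ‖ξ‖ = 1 ∧ ∀ a, φ a = ⟪ξ, π a ξ⟫_𝕜 := by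
  obtain ⟨e, he⟩ : ∃ e, φ e = 1 := by
    obtain ⟨b, hb⟩ := DFunLike.ne_iff.mp hφ
    exact ⟨(φ b)⁻¹ • b, by simpa using inv_mul_cancel₀ hb⟩
  let N := closedKerOrbit π φ η
  have : CompleteSpace N := (Submodule.isClosed_topologicalClosure _).completeSpace_coe
  set ξ := π e η - N.starProjection (π e η)
  have hζ : N ≤ LinearMap.ker (innerSL 𝕜 ζ : E →ₗ[𝕜] 𝕜) :=
    closedKerOrbit.le_of_isClosed (innerSL 𝕜 ζ).isClosed_ker fun a ha ↦ (h a).symm.trans ha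
  have hξ : ξ ≠ 0 := by
    intro hzero
    have heN : π e η ∈ N := sub_eq_zero.mp hzero ▸ N.starProjection_apply_mem (π e η)
    exact one_ne_zero (he.symm.trans ((h e).trans (hζ heN)))
  have hinner (a : R) : ⟪ξ, π a ξ⟫_𝕜 = φ a * (‖ξ‖ : 𝕜) ^ 2 :=
    inner_map_sub_starProjection_self N (T := π a) (closedKerOrbit.mapsTo π φ η a)
      (closedKerOrbit.map_sub_smul_mem π φ η he a)
  have hnorm : (‖ξ‖ : 𝕜) ≠ 0 := RCLike.ofReal_ne_zero.mpr (norm_ne_zero_iff.mpr hξ)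
  refine ⟨(‖ξ‖ : 𝕜)⁻¹ • ξ, norm_smul_inv_norm hξ, fun a ↦ ?_⟩
  rw [map_smul, inner_smul_left, inner_smul_right, hinner, map_inv₀, RCLike.conj_ofReal]
  field_simp

end InnerProductSpace

/-- The amplification of operators on `E` to `ℓᵖ(ι, E)`, acting diagonally: `(T x) i = T (x i)`. -/
noncomputable def lpAmplification (ι 𝕜 E : Type*) [NontriviallyNormedField 𝕜]
    [NormedAddCommGroup E] [NormedSpace 𝕜 E] (p : ℝ≥0∞) [Fact (1 ≤ p)] :
    (E →L[𝕜] E) →ₐ[𝕜] (lp (fun _ : ι ↦ E) p →L[𝕜] lp (fun _ : ι ↦ E) p) where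
  toFun T := lp.mapCLM p (fun _ ↦ T) (norm_nonneg T) fun _ ↦ le_rfl
  map_one' := rfl
  map_mul' _ _ := rfl
  map_zero' := rfl
  map_add' _ _ := rfl
  commutes' _ := rfl

section SquareSummable

variable {ι : Type*} {E : ι → Type*} [∀ i, NormedAddCommGroup (E i)]

theorem memℓp_two_iff_summable_sq {f : ∀ i, E i} :
    Memℓp f 2 ↔ Summable fun i ↦ ‖f i‖ ^ 2 := by
  simpa using memℓp_gen_iff (p := 2) (f := f) (by norm_num)

theorem tsum_norm_sq_eq_lp_norm_sq (f : lp E 2) : ∑' i, ‖f i‖ ^ 2 = ‖f‖ ^ 2 := by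
  simpa using (lp.norm_rpow_eq_tsum (p := 2) (by norm_num) f).symm

end SquareSummable

theorem hoffman_rossi_BH_general {ι 𝕜 R H : Type*} [RCLike 𝕜] [NormedAddCommGroup H]
    [InnerProductSpace 𝕜 H] [CompleteSpace H] [NonUnitalRing R] [Module 𝕜 R]
    (π : R →ₙₐ[𝕜] (H →L[𝕜] H)) (φ : R →ₙₐ[𝕜] 𝕜) (hφ : φ ≠ 0) {η ζ : ι → H}
    (hη : Summable fun i ↦ ‖η i‖ ^ 2) (hζ : Summable fun i ↦ ‖ζ i‖ ^ 2)
    (h : ∀ a, φ a = ∑' i, ⟪ζ i, π a (η i)⟫_𝕜) :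
    ∃ ξ : ι → H, ∑' i, ‖ξ i‖ ^ 2 = 1 ∧ ∀ a, φ a = ∑' i, ⟪ξ i, π a (ξ i)⟫_𝕜 := by
  let amplified := (lpAmplification ι 𝕜 H 2).toNonUnitalAlgHom.comp π
  have inner_amplified (x y : lp (fun _ : ι ↦ H) 2) (a : R) :
      ⟪x, amplified a y⟫_𝕜 = ∑' i, ⟪x i, π a (y i)⟫_𝕜 := lp.inner_eq_tsum _ _
  let η' : lp (fun _ : ι ↦ H) 2 := ⟨η, memℓp_two_iff_summable_sq.mpr hη⟩
  let ζ' : lp (fun _ : ι ↦ H) 2 := ⟨ζ, memℓp_two_iff_summable_sq.mpr hζ⟩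
  obtain ⟨ξ, hξ, hφξ⟩ := exists_norm_eq_one_forall_eq_inner hφ
    fun a ↦ (h a).trans (inner_amplified ζ' η' a).symm
  refine ⟨ξ, ?_, fun a ↦ (hφξ a).trans (inner_amplified ξ ξ a)⟩
  rw [tsum_norm_sq_eq_lp_norm_sq, hξ, one_pow]

/-- **Hoffman–Rossi theorem for `B(H)`.**  Let `A` be a unital σ-weakly closed subalgebra of
`B(H)` (σ-weak closedness being expressed by separation by σ-weakly continuous functionals),
and let `φ` be a σ-weakly continuous character on `A`, i.e. `φ(a) = Σₙ ⟨a ηₙ, ζₙ⟩` for square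
summable sequences `(ηₙ), (ζₙ)`.  Then `φ` has a normal state extension to `B(H)`:
`φ(a) = Σₙ ⟨a ξₙ, ξₙ⟩` on `A` for some sequence `(ξₙ)` with `Σₙ ‖ξₙ‖² = 1`. -/
theorem hoffman_rossi_BH {H : Type*} [NormedAddCommGroup H] [InnerProductSpace ℂ H]
    [CompleteSpace H]
    (A : Subalgebra ℂ (H →L[ℂ] H))
    (hclosed : ∀ x : H →L[ℂ] H, x ∉ A →
      ∃ η ζ : ℕ → H, Summable (fun n => ‖η n‖ ^ 2) ∧ Summable (fun n => ‖ζ n‖ ^ 2) ∧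
        (∀ a ∈ A, (∑' n, (inner ℂ (ζ n) (a (η n)) : ℂ)) = 0) ∧
        (∑' n, (inner ℂ (ζ n) (x (η n)) : ℂ)) ≠ 0)
    (φ : A →ₗ[ℂ] ℂ)
    (hunit : φ 1 = 1)
    (hmul : ∀ a b : A, φ (a * b) = φ a * φ b)
    (hcont : ∃ η ζ : ℕ → H, Summable (fun n => ‖η n‖ ^ 2) ∧ Summable (fun n => ‖ζ n‖ ^ 2) ∧
      ∀ a : A, φ a = ∑' n, (inner ℂ (ζ n) ((a : H →L[ℂ] H) (η n)) : ℂ)) :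
    ∃ ξ : ℕ → H, (∑' n, ‖ξ n‖ ^ 2) = (1 : ℝ) ∧
      ∀ a : A, φ a = ∑' n, (inner ℂ (ξ n) ((a : H →L[ℂ] H) (ξ n)) : ℂ) := by
  obtain ⟨η, ζ, hη, hζ, h⟩ := hcont
  exact hoffman_rossi_BH_general A.val.toNonUnitalAlgHom
    (AlgHom.ofLinearMap φ hunit hmul).toNonUnitalAlgHom
    (DFunLike.ne_iff.mpr ⟨1, ne_of_eq_of_ne hunit one_ne_zero⟩) hη hζ h
end

section
/- (Finite-dimensional Hoffman–Rossi theorem.) Let A be a subalgebra of the n×n complex matrices Mₙ(ℂ) containing the identity matrix, and let φ : A → ℂ be a linear map with φ(1) = 1 and φ(xy) = φ(x)φ(y) for all x, y ∈ A. Then there exists a positive semidefinite matrix ρ ∈ Mₙ(ℂ) with trace(ρ) = 1 such that φ(x) = trace(ρ·x) for all x ∈ A. That is, every character on a unital subalgebra of Mₙ(ℂ) extends to a state on Mₙ(ℂ). -/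
open scoped ComplexOrder

set_option synthInstance.maxHeartbeats 1000000
set_option maxHeartbeats 1000000

/-!
The operators `x - φ(x)` with `x ∈ A` form a multiplicatively closed subspace `B` that does not
contain `1`. If every vector `v` were fixed by some `b ∈ B`, the identity
`1 - (b + c - b * c) = (1 - b) * (1 - c)` would combine these into one element fixing a spanning
set, that is, `1 ∈ B`. So some `v` lies outside the `B`-stable subspace `B v = {b v | b ∈ B}`. The
component `u` of `v` orthogonal to `B v` is nonzero, and `b u ∈ B v` gives `⟪u, b u⟫ = 0`.
Hence the vector state of the normalized `u` extends `φ`.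
-/

open Matrix

open scoped InnerProductSpace

section LocalUnit

variable {R M : Type*} [Ring R] [AddCommGroup M] [Module R M]

lemma exists_mem_forall_finset_apply_eq_self {B : NonUnitalSubring (Module.End R M)}
    (hB : ∀ v, ∃ b ∈ B, b v = v) (s : Finset M) : ∃ b ∈ B, ∀ v ∈ s, b v = v := by
  classical
  induction s using Finset.induction_on with
  | empty => exact ⟨0, B.zero_mem, by simp⟩
  | insert a s _ ih =>
    obtain ⟨c, hc, hcs⟩ := ih
    obtain ⟨b, hb, hba⟩ := hB (a - c a)
    have hsub (v : M) : (b + c - b * c) v = b (v - c v) + c v := by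
      simp only [LinearMap.sub_apply, LinearMap.add_apply, Module.End.mul_apply, map_sub]
      abel
    refine ⟨b + c - b * c, B.sub_mem (B.add_mem hb hc) (B.mul_mem hb hc), fun v hv ↦ ?_⟩
    rw [hsub]
    rcases Finset.mem_insert.1 hv with rfl | hv
    · rw [hba, sub_add_cancel]
    · rw [hcs v hv, sub_self, map_zero, zero_add]

lemma one_mem_of_forall_exists_mem_apply_eq_self [Module.Finite R M]
    {B : NonUnitalSubring (Module.End R M)} (hB : ∀ v, ∃ b ∈ B, b v = v) : 1 ∈ B := by
  obtain ⟨s, hs⟩ := Module.Finite.fg_top (R := R) (M := M)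
  obtain ⟨b, hb, hbs⟩ := exists_mem_forall_finset_apply_eq_self hB s
  have hb_one : b = 1 := LinearMap.ext_on hs hbs
  exact hb_one ▸ hb

end LocalUnit

section ShiftedRange

variable {R S : Type*} [CommRing R] [Ring S] [Algebra R S] {A : NonUnitalSubalgebra R S}

/-- The elements `x - φ(x)` for `x ∈ A`. When `φ` extends to a character of `A + R · 1`, this is
the kernel of the extension. -/
def shiftedRange (φ : A →ₙₐ[R] R) : NonUnitalSubalgebra R S where
  carrier := Set.range fun x : A ↦ (x : S) - algebraMap R S (φ x)
  zero_mem' := ⟨0, by simp⟩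
  add_mem' := by
    rintro _ _ ⟨x, rfl⟩ ⟨y, rfl⟩
    exact ⟨x + y, by simp [add_sub_add_comm]⟩
  smul_mem' := by
    rintro c _ ⟨x, rfl⟩
    exact ⟨c • x, by simp [Algebra.smul_def, mul_sub]⟩
  mul_mem' := by
    rintro _ _ ⟨x, rfl⟩ ⟨y, rfl⟩
    have hφxy : φ (x * y - φ x • y - φ y • x) = -(φ x * φ y) := by
      simp [mul_comm (φ y)]
    refine ⟨x * y - φ x • y - φ y • x, ?_⟩
    simp only [hφxy, sub_mul, mul_sub, Algebra.smul_def, Algebra.commutes (φ y) (x : S), map_neg,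
      map_mul, NonUnitalSubalgebra.coe_sub, NonUnitalSubalgebra.coe_mul,
      NonUnitalSubalgebra.coe_smul]
    abel

lemma sub_algebraMap_mem_shiftedRange (φ : A →ₙₐ[R] R) (x : A) :
    (x : S) - algebraMap R S (φ x) ∈ shiftedRange φ :=
  ⟨x, rfl⟩

lemma one_notMem_shiftedRange [Nontrivial R] {φ : A →ₙₐ[R] R}
    (hφ : ∀ h : 1 ∈ A, φ ⟨1, h⟩ = 1) : 1 ∉ shiftedRange φ := by
  rintro ⟨x, hx : (x : S) - algebraMap R S (φ x) = 1⟩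
  have hx_eq : (x : S) = 1 + algebraMap R S (φ x) := sub_eq_iff_eq_add.1 hx
  have hx_sq : x * x = x + φ x • x := by
    ext
    calc (x : S) * x = (1 + algebraMap R S (φ x)) * x := by rw [← hx_eq]
      _ = x + φ x • (x : S) := by rw [add_mul, one_mul, Algebra.smul_def]
  have hφx : φ x = 0 := by simpa using congrArg φ hx_sq
  have hx_one : (x : S) = 1 := by rw [hx_eq, hφx, map_zero, add_zero]
  have hone_mem : (1 : S) ∈ A := hx_one ▸ x.2
  have hx_mk : x = ⟨1, hone_mem⟩ := Subtype.ext hx_one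
  exact zero_ne_one (hφx.symm.trans (hx_mk ▸ hφ hone_mem))

end ShiftedRange

section VectorState

variable {𝕜 : Type*} [RCLike 𝕜]

lemma exists_norm_eq_one_forall_mem_inner_apply_eq_zero {E : Type*} [NormedAddCommGroup E]
    [InnerProductSpace 𝕜 E] [FiniteDimensional 𝕜 E] {B : NonUnitalSubalgebra 𝕜 (Module.End 𝕜 E)}
    (hB : 1 ∉ B) : ∃ u : E, ‖u‖ = 1 ∧ ∀ b ∈ B, ⟪u, b u⟫_𝕜 = 0 := by
  obtain ⟨v, hv⟩ : ∃ v, ∀ b ∈ B, b v ≠ v := by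
    contrapose! hB
    exact one_mem_of_forall_exists_mem_apply_eq_self (B := B.toNonUnitalSubring) hB
  let W : Submodule 𝕜 E := B.toSubmodule.map (LinearMap.applyₗ v)
  obtain ⟨_, ⟨c, hc, rfl⟩, u, hu, hvu⟩ := W.exists_add_mem_mem_orthogonal v
  have hu_ne : u ≠ 0 := by
    rintro rfl
    exact hv c hc (by simpa using hvu.symm)
  have hbu {b : Module.End 𝕜 E} (hb : b ∈ B) : b u ∈ W := by
    refine ⟨b - b * c, B.sub_mem hb (B.mul_mem hb hc), ?_⟩
    have hu_eq : u = v - c v := eq_sub_of_add_eq' hvu.symm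
    simp [hu_eq]
  refine ⟨(‖u‖⁻¹ : 𝕜) • u, norm_smul_inv_norm hu_ne, fun b hb ↦ ?_⟩
  rw [map_smul, inner_smul_left, inner_smul_right, W.inner_left_of_mem_orthogonal (hbu hb) hu,
    mul_zero, mul_zero]

variable {ι : Type*} [Fintype ι] [DecidableEq ι]

lemma exists_forall_mem_star_dotProduct_mulVec_eq_zero {B : NonUnitalSubalgebra 𝕜 (Matrix ι ι 𝕜)}
    (hB : 1 ∉ B) : ∃ u : ι → 𝕜, star u ⬝ᵥ u = 1 ∧ ∀ b ∈ B, star u ⬝ᵥ b *ᵥ u = 0 := by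
  let e : Matrix ι ι 𝕜 ≃ₐ[𝕜] Module.End 𝕜 (EuclideanSpace 𝕜 ι) := toLpLinAlgEquiv 2
  have h_one : 1 ∉ B.map e := by
    rintro ⟨b, hb, hb_one⟩
    exact hB (e.map_eq_one_iff.1 hb_one ▸ hb)
  obtain ⟨u, hu, horth⟩ := exists_norm_eq_one_forall_mem_inner_apply_eq_zero h_one
  refine ⟨u.ofLp, ?_, fun b hb ↦ ?_⟩
  · rw [dotProduct_comm, ← EuclideanSpace.inner_eq_star_dotProduct, inner_self_eq_norm_sq_to_K, hu]
    simp
  · rw [dotProduct_comm]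
    exact horth (e b) ⟨b, hb, rfl⟩

theorem hoffman_rossi_matrix_general (A : NonUnitalSubalgebra 𝕜 (Matrix ι ι 𝕜))
    (φ : A →ₙₐ[𝕜] 𝕜) (hφ : ∀ h : 1 ∈ A, φ ⟨1, h⟩ = 1) :
    ∃ u : ι → 𝕜, star u ⬝ᵥ u = 1 ∧
      ∀ x : A, φ x = (vecMulVec u (star u) * (x : Matrix ι ι 𝕜)).trace := by
  obtain ⟨u, hu, horth⟩ :=
    exists_forall_mem_star_dotProduct_mulVec_eq_zero (one_notMem_shiftedRange hφ)
  refine ⟨u, hu, fun x ↦ ?_⟩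
  have hx : star u ⬝ᵥ (x : Matrix ι ι 𝕜) *ᵥ u - φ x = 0 := by
    simpa [sub_mulVec, Algebra.algebraMap_eq_smul_one, smul_mulVec, hu] using
      horth _ (sub_algebraMap_mem_shiftedRange φ x)
  rw [vecMulVec_mul, trace_vecMulVec, dotProduct_comm, ← dotProduct_mulVec, sub_eq_zero.1 hx]

end VectorState

/-- **Finite-dimensional Hoffman–Rossi theorem.**  Every character `φ` on a unital subalgebra
`A` of `Mₙ(ℂ)` extends to a state on `Mₙ(ℂ)`: there is a positive semidefinite `ρ` of trace `1`
(a density matrix) with `φ(x) = tr(ρx)` for all `x ∈ A`. -/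
theorem hoffman_rossi_matrix {n : ℕ}
    (A : Subalgebra ℂ (Matrix (Fin n) (Fin n) ℂ))
    (φ : A →ₗ[ℂ] ℂ)
    (hunit : φ 1 = 1)
    (hmul : ∀ x y : A, φ (x * y) = φ x * φ y) :
    ∃ ρ : Matrix (Fin n) (Fin n) ℂ, ρ.PosSemidef ∧ ρ.trace = 1 ∧
      ∀ x : A, φ x = (ρ * (x : Matrix (Fin n) (Fin n) ℂ)).trace := by
  obtain ⟨u, hu, hφ⟩ := hoffman_rossi_matrix_general A.toNonUnitalSubalgebra
    { φ with map_zero' := φ.map_zero, map_mul' := hmul } fun _ ↦ hunit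
  exact ⟨vecMulVec u (star u), posSemidef_vecMulVec_self_star u,
    by rwa [trace_vecMulVec, dotProduct_comm], hφ⟩
end

section
/- (Finite-dimensional D-valued Hoffman–Rossi theorem.) Let D ⊆ A ⊆ Mₙ(ℂ), where A is a subalgebra of Mₙ(ℂ) containing the identity matrix, and D is a subalgebra of A containing the identity which is closed under conjugate transpose (a *-subalgebra). Let Φ : A → Mₙ(ℂ) be a linear map with range contained in D such that Φ(xy) = Φ(x)Φ(y) for all x, y ∈ A and Φ(d) = d for all d ∈ D. Then there exists a linear map Ψ : Mₙ(ℂ) → Mₙ(ℂ) with range contained in D such that: Ψ(a) = Φ(a) for all a ∈ A; Ψ(x) is positive semidefinite whenever x ∈ Mₙ(ℂ) is positive semidefinite; Ψ(1) = 1; and Ψ(d·x·d') = d·Ψ(x)·d' for all d, d' ∈ D and x ∈ Mₙ(ℂ). That is, Φ extends to a conditional expectation of Mₙ(ℂ) onto D. -/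
open scoped ComplexOrder

set_option synthInstance.maxHeartbeats 1000000
set_option maxHeartbeats 1000000

/-!
The regular trace `τ` of `D` is a faithful positive trace. If `a ∈ A` satisfies `0 ≤ a + star a` and
`0 < ε`, then `‖1 - t • (a + ε)‖ < 1` for some `t > 0`, so that `a + ε` is invertible in `A`. Hence
the spectrum of `Φ a` lies in the closed right half-plane, and so does `τ (Φ a)`, which is a sum of
spectral values. By the M. Riesz extension theorem `τ ∘ Φ` extends to a positive functional `ω` on
the whole C⋆-algebra.

Let `b` be a basis of `D` that is orthonormal for `⟪x, y⟫ = τ (star x * y)`. The expectation is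
`x ↦ ∑ i, ∑ j, ω (star (b i) * x * b j) • (b i * star (b j))`. It is positive because its
coefficients are Gram matrices of `ω` when `0 ≤ x`, it is a `D`-bimodule map because
`∑ j, b j ⊗ star (b j)` is a Casimir element of `D ⊗ D`, and it agrees with `Φ` on `A` because
`∑ j, b j * star (b j) = 1`.
-/

open Module

/-- The trace of the left regular representation of a `K`-algebra `B`; this is `Algebra.trace`
without the commutativity assumption on `B`. It is `0` when `B` has no finite `K`-basis. -/
noncomputable def regularTrace (K B : Type*) [CommRing K] [Ring B] [Algebra K B] : B →ₗ[K] K :=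
  LinearMap.trace K B ∘ₗ (Algebra.lmul K B).toLinearMap

section Algebra

variable {K B : Type*} [CommRing K] [Ring B] [Algebra K B]

lemma regularTrace_mul_comm (x y : B) : regularTrace K B (x * y) = regularTrace K B (y * x) := by
  simp only [regularTrace, LinearMap.comp_apply, AlgHom.toLinearMap_apply, map_mul]
  exact LinearMap.trace_mul_comm K _ _

lemma spectrum_lmul (x : B) : spectrum K (Algebra.lmul K B x) = spectrum K x := by
  ext μ
  rw [spectrum.mem_iff, spectrum.mem_iff, ← AlgHom.commutes (Algebra.lmul K B), ← map_sub,
    Algebra.lmul_isUnit_iff]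

/-- The family `b'` is dual to the basis `b` for the bilinear form `(x, y) ↦ τ (x * y)` given by the
regular trace `τ`. For `b' i = star (b i)` this says that `b` is orthonormal for
`⟪x, y⟫ = τ (star x * y)`. -/
def IsTraceDual {ι : Type*} [DecidableEq ι] (b : Basis ι K B) (b' : ι → B) : Prop :=
  ∀ i j, regularTrace K B (b' i * b j) = if i = j then 1 else 0

namespace IsTraceDual

variable {ι : Type*} [DecidableEq ι] {b : Basis ι K B} {b' : ι → B}

lemma repr_eq_regularTrace (h : IsTraceDual b b') (x : B) (i : ι) :
    b.repr x i = regularTrace K B (b' i * x) := by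
  suffices b.coord i = regularTrace K B ∘ₗ LinearMap.mulLeft K (b' i) from
    LinearMap.congr_fun this x
  refine b.ext fun j ↦ ?_
  simp [h i j, Finsupp.single_apply, eq_comm]

lemma ext_regularTrace (h : IsTraceDual b b') {x y : B}
    (hxy : ∀ z, regularTrace K B (z * x) = regularTrace K B (z * y)) : x = y :=
  b.ext_elem fun i ↦ by rw [h.repr_eq_regularTrace, h.repr_eq_regularTrace, hxy]

variable [Fintype ι]

lemma sum_regularTrace_smul (h : IsTraceDual b b') (x : B) :
    ∑ i, regularTrace K B (b' i * x) • b i = x := by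
  simp_rw [← h.repr_eq_regularTrace, b.sum_repr]

lemma sum_regularTrace_smul_dual (h : IsTraceDual b b') (x : B) :
    ∑ j, regularTrace K B (x * b j) • b' j = x := by
  refine h.ext_regularTrace fun z ↦ ?_
  suffices regularTrace K B ∘ₗ LinearMap.mulRight K (∑ j, regularTrace K B (x * b j) • b' j) =
      regularTrace K B ∘ₗ LinearMap.mulRight K x from LinearMap.congr_fun this z
  refine b.ext fun j ↦ ?_
  simp [regularTrace_mul_comm (b _), Finset.sum_mul, h _ j]

lemma sum_mul_eq_one (h : IsTraceDual b b') : ∑ i, b i * b' i = 1 := by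
  refine h.ext_regularTrace fun x ↦ ?_
  calc regularTrace K B (x * ∑ i, b i * b' i)
      = ∑ i, regularTrace K B (b' i * (x * b i)) := by
        simp only [Finset.mul_sum, map_sum, ← mul_assoc, regularTrace_mul_comm (_ * _) (b' _)]
    _ = regularTrace K B x := by
        simp_rw [← h.repr_eq_regularTrace]
        rw [regularTrace, LinearMap.comp_apply, LinearMap.trace_eq_matrix_trace K b]
        simp [Matrix.trace, LinearMap.toMatrix_apply]
    _ = regularTrace K B (x * 1) := by rw [mul_one]

lemma sum_apply_mul (h : IsTraceDual b b') {V : Type*} [AddCommMonoid V] [Module K V]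
    (F : B →ₗ[K] B →ₗ[K] V) (d : B) :
    ∑ j, F (d * b j) (b' j) = ∑ i, F (b i) (b' i * d) := by
  calc ∑ j, F (d * b j) (b' j)
      = ∑ j, ∑ i, regularTrace K B (b' i * (d * b j)) • F (b i) (b' j) := by
        refine Finset.sum_congr rfl fun j _ ↦ ?_
        conv_lhs => rw [← h.sum_regularTrace_smul (d * b j)]
        simp
    _ = ∑ i, ∑ j, regularTrace K B (b' i * d * b j) • F (b i) (b' j) := by
        rw [Finset.sum_comm]
        simp only [mul_assoc]
    _ = ∑ i, F (b i) (b' i * d) := by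
        refine Finset.sum_congr rfl fun i _ ↦ ?_
        conv_rhs => rw [← h.sum_regularTrace_smul_dual (b' i * d)]
        simp

end IsTraceDual

end Algebra

section Field

variable {K B : Type*} [Field K] [Ring B] [Algebra K B] [FiniteDimensional K B]

lemma mem_roots_charpoly_lmul {x : B} {μ : K} :
    μ ∈ (Algebra.lmul K B x).charpoly.roots ↔ μ ∈ spectrum K x := by
  rw [Polynomial.mem_roots (LinearMap.charpoly_monic _).ne_zero,
    ← Module.End.mem_spectrum_iff_isRoot_charpoly, spectrum_lmul]

lemma regularTrace_eq_sum_roots [IsAlgClosed K] (x : B) :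
    regularTrace K B x = (Algebra.lmul K B x).charpoly.roots.sum :=
  Module.End.trace_eq_sum_roots_charpoly_of_splits (IsAlgClosed.splits _)

end Field

section FiniteDimensionalCStarAlgebra

variable {B : Type*} [CStarAlgebra B] [PartialOrder B] [StarOrderedRing B] [FiniteDimensional ℂ B]

lemma regularTrace_nonneg {x : B} (hx : 0 ≤ x) : 0 ≤ regularTrace ℂ B x := by
  rw [regularTrace_eq_sum_roots]
  exact Multiset.sum_nonneg fun μ hμ ↦ spectrum_nonneg_of_nonneg hx (mem_roots_charpoly_lmul.mp hμ)

lemma eq_zero_of_regularTrace_eq_zero {x : B} (hx : 0 ≤ x) (h : regularTrace ℂ B x = 0) :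
    x = 0 := by
  rw [regularTrace_eq_sum_roots] at h
  have hroots := Multiset.all_zero_of_le_zero_le_of_sum_eq_zero
    (fun μ hμ ↦ spectrum_nonneg_of_nonneg hx (mem_roots_charpoly_lmul.mp hμ)) h
  exact CFC.eq_zero_of_spectrum_subset_zero (R := ℂ) x
    (fun μ hμ ↦ hroots _ (mem_roots_charpoly_lmul.mpr hμ))

lemma exists_basis_orthonormal (τ : B →ₚ[ℂ] ℂ) (hτ : ∀ x, 0 ≤ x → τ x = 0 → x = 0) :
    ∃ b : Basis (Fin (finrank ℂ B)) ℂ B,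
      ∀ i j, τ (star (b i) * b j) = if i = j then 1 else 0 := by
  let core : InnerProductSpace.Core ℂ τ.PreGNS :=
    { τ.preGNSpreInnerProdSpace with
      definite x hx := CStarRing.star_mul_self_eq_zero_iff _ |>.mp <|
        hτ _ (star_mul_self_nonneg (τ.ofPreGNS x)) hx }
  let _ : NormedAddCommGroup τ.PreGNS := core.toNormedAddCommGroup
  let _ : InnerProductSpace ℂ τ.PreGNS := .ofCore core.toCore
  have : FiniteDimensional ℂ τ.PreGNS := τ.toPreGNS.finiteDimensional
  let b := (stdOrthonormalBasis ℂ τ.PreGNS).reindex (finCongr τ.ofPreGNS.finrank_eq)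
  refine ⟨b.toBasis.map τ.ofPreGNS, fun i j ↦ ?_⟩
  rw [Basis.map_apply, Basis.map_apply, b.coe_toBasis]
  exact orthonormal_iff_ite.mp b.orthonormal i j

end FiniteDimensionalCStarAlgebra

lemma exists_basis_isTraceDual_star (B : Type*) [CStarAlgebra B] [FiniteDimensional ℂ B] :
    ∃ b : Basis (Fin (finrank ℂ B)) ℂ B, IsTraceDual b fun i ↦ star (b i) :=
  let _ := CStarAlgebra.spectralOrder B
  have := CStarAlgebra.spectralOrderedRing B
  exists_basis_orthonormal (.mk₀ (regularTrace ℂ B) fun _ ↦ regularTrace_nonneg)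
    fun _ ↦ eq_zero_of_regularTrace_eq_zero

section Accretive

variable {M : Type*} [CStarAlgebra M] [PartialOrder M] [StarOrderedRing M]

lemma star_one_sub_mul_one_sub_le {b : M} {r t : ℝ} (ht : 0 ≤ t)
    (hb : algebraMap ℝ M r ≤ b + star b) :
    star (1 - t • b) * (1 - t • b) ≤ algebraMap ℝ M (1 - t * r + t ^ 2 * ‖b‖ ^ 2) := by
  calc star (1 - t • b) * (1 - t • b) = 1 - t • (b + star b) + t ^ 2 • (star b * b) := by
        simp only [star_sub, star_one, star_smul, star_trivial, sub_mul, mul_sub, one_mul, mul_one,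
          smul_mul_assoc, mul_smul_comm, smul_sub, smul_smul, smul_add, sq]
        abel
    _ ≤ 1 - t • algebraMap ℝ M r + t ^ 2 • algebraMap ℝ M (‖b‖ ^ 2) := by
        gcongr
        exact CStarAlgebra.star_mul_le_algebraMap_norm_sq
    _ = algebraMap ℝ M (1 - t * r + t ^ 2 * ‖b‖ ^ 2) := by
        simp [Algebra.smul_def]

lemma exists_norm_one_sub_smul_lt_one {b : M} {r : ℝ} (hr : 0 < r)
    (hb : algebraMap ℝ M r ≤ b + star b) : ∃ t : ℝ, 0 < t ∧ ‖1 - t • b‖ < 1 := by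
  let t := r / (‖b‖ ^ 2 + r ^ 2)
  have hden : 0 < ‖b‖ ^ 2 + r ^ 2 := by positivity
  have ht : 0 < t := by positivity
  have hmul : t * ‖b‖ ^ 2 + t * r ^ 2 = r := by
    simp only [t]
    field_simp
  have hq : 1 - t * r + t ^ 2 * ‖b‖ ^ 2 = 1 - (t * r) ^ 2 := by linear_combination t * hmul
  have hq0 : 0 ≤ 1 - (t * r) ^ 2 := by
    have : t * r ≤ 1 := by
      rw [div_mul_eq_mul_div, div_le_one hden]
      linarith [sq_nonneg ‖b‖, sq r]
    nlinarith [mul_pos ht hr]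
  refine ⟨t, ht, ?_⟩
  have hle := star_one_sub_mul_one_sub_le ht.le hb
  rw [hq, ← CStarAlgebra.norm_le_iff_le_algebraMap _ hq0 (star_mul_self_nonneg _),
    CStarRing.norm_star_mul_self] at hle
  nlinarith [mul_pos ht hr, norm_nonneg (1 - t • b)]

lemma isUnit_of_algebraMap_le_add_star {A : Subalgebra ℂ M} (hA : IsClosed (A : Set M)) {b : A}
    {r : ℝ} (hr : 0 < r) (hb : algebraMap ℝ M r ≤ (b : M) + star (b : M)) : IsUnit b := by
  have := hA.completeSpace_coe
  obtain ⟨t, ht, hlt⟩ := exists_norm_one_sub_smul_lt_one hr hb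
  have hunit : IsUnit (t • b) := by
    simpa only [sub_sub_cancel] using isUnit_one_sub_of_norm_lt_one (x := 1 - t • b) hlt
  exact (isUnit_smul_iff (Units.mk0 t ht.ne') b).mp hunit

lemma re_nonneg_of_mem_spectrum {A : Subalgebra ℂ M} (hA : IsClosed (A : Set M)) {a : A}
    (ha : 0 ≤ (a : M) + star (a : M)) {μ : ℂ} (hμ : μ ∈ spectrum ℂ a) : 0 ≤ μ.re := by
  by_contra! hneg
  refine spectrum.mem_iff.mp hμ (IsUnit.sub_iff.mp ?_)
  refine isUnit_of_algebraMap_le_add_star hA (r := -2 * μ.re) (by linarith) ?_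
  have : ((a - algebraMap ℂ A μ : A) : M) + star ((a - algebraMap ℂ A μ : A) : M) =
      algebraMap ℝ M (-2 * μ.re) + (a + star (a : M)) := by
    have hμ : algebraMap ℂ M μ + star (algebraMap ℂ M μ) = algebraMap ℝ M (2 * μ.re) := by
      rw [← algebraMap_star_comm, ← map_add, Complex.star_def, Complex.add_conj,
        IsScalarTower.algebraMap_apply ℝ ℂ M, Complex.coe_algebraMap]
    rw [neg_mul, map_neg, ← hμ]
    simp only [AddSubgroupClass.coe_sub, Subalgebra.coe_algebraMap, star_sub]
    abel
  rw [this]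
  exact le_add_of_nonneg_right ha

end Accretive

lemma re_regularTrace_map_nonneg {M B : Type*} [CStarAlgebra M] [PartialOrder M] [StarOrderedRing M]
    [Ring B] [Algebra ℂ B] [FiniteDimensional ℂ B]
    {A : Subalgebra ℂ M} (hA : IsClosed (A : Set M)) (Φ : A →ₐ[ℂ] B) {a : A}
    (ha : 0 ≤ (a : M) + star (a : M)) : 0 ≤ (regularTrace ℂ B (Φ a)).re := by
  rw [regularTrace_eq_sum_roots, ← Complex.coe_reAddGroupHom, map_multiset_sum]
  refine Multiset.sum_nonneg fun r hr ↦ ?_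
  obtain ⟨μ, hμ, rfl⟩ := Multiset.mem_map.mp hr
  exact re_nonneg_of_mem_spectrum hA ha <|
    AlgHom.spectrum_apply_subset Φ a (mem_roots_charpoly_lmul.mp hμ)

section Riesz

variable {M : Type*} [CStarAlgebra M] [PartialOrder M] [StarOrderedRing M]

variable (M) in
/-- The real cone of accretive elements, those with nonnegative real part `(x + star x) / 2`. -/
noncomputable def accretiveCone : PointedCone ℝ M :=
  (PointedCone.positive ℝ M).comap (LinearMap.id + (starLinearEquiv ℝ : M ≃ₗ[ℝ] M).toLinearMap)

lemma mem_accretiveCone {x : M} : x ∈ accretiveCone M ↔ 0 ≤ x + star x := by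
  simp [accretiveCone]

lemma mem_accretiveCone_of_nonneg {x : M} (hx : 0 ≤ x) : x ∈ accretiveCone M :=
  mem_accretiveCone.mpr (add_nonneg hx (star_nonneg_iff.mpr hx))

lemma exists_algebraMap_add_mem_accretiveCone (y : M) :
    ∃ t : ℝ, algebraMap ℝ M t + y ∈ accretiveCone M := by
  refine ⟨‖y + star y‖, mem_accretiveCone.mpr ?_⟩
  have hy : 0 ≤ algebraMap ℝ M ‖y + star y‖ + (y + star y) :=
    neg_le_iff_add_nonneg'.mp (IsSelfAdjoint.add_star_self y).neg_algebraMap_norm_le_self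
  have hn : 0 ≤ algebraMap ℝ M ‖y + star y‖ := algebraMap_nonneg M (norm_nonneg _)
  rw [star_add, hn.isSelfAdjoint.star_eq, add_add_add_comm, add_assoc]
  exact add_nonneg hn hy

lemma apply_eq_zero_of_accretiveCone_nonneg {g : M →ₗ[ℝ] ℝ}
    (hg : ∀ x ∈ accretiveCone M, 0 ≤ g x) {x : M} (hx : star x = -x) : g x = 0 := by
  have hneg := hg (-x) (by simp [mem_accretiveCone, hx])
  rw [map_neg] at hneg
  exact le_antisymm (neg_nonneg.mp hneg) (hg x (by simp [mem_accretiveCone, hx]))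

lemma extendRCLike_nonneg_of_accretiveCone_nonneg {g : M →ₗ[ℝ] ℝ}
    (hg : ∀ x ∈ accretiveCone M, 0 ≤ g x) {x : M} (hx : 0 ≤ x) :
    0 ≤ (Dual.extendRCLike g x : ℂ) := by
  have him : g (Complex.I • x) = 0 :=
    apply_eq_zero_of_accretiveCone_nonneg hg (by simp [hx.isSelfAdjoint.star_eq])
  rw [Dual.extendRCLike_apply, RCLike.I_to_complex, him]
  simpa using hg x (mem_accretiveCone_of_nonneg hx)

lemma exists_linearMap_nonneg_eq_re (V : Submodule ℂ M) (h1 : 1 ∈ V) (f : V →ₗ[ℂ] ℂ)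
    (hf : ∀ v : V, 0 ≤ (v : M) + star (v : M) → 0 ≤ (f v).re) :
    ∃ g : M →ₗ[ℝ] ℝ, (∀ v : V, g v = (f v).re) ∧ ∀ x ∈ accretiveCone M, 0 ≤ g x := by
  refine riesz_extension (accretiveCone M)
    ⟨V.restrictScalars ℝ, Complex.reLm ∘ₗ f.restrictScalars ℝ⟩
    (fun v hv ↦ hf v (mem_accretiveCone.mp hv)) fun y ↦ ?_
  obtain ⟨t, ht⟩ := exists_algebraMap_add_mem_accretiveCone y
  have hmem : algebraMap ℝ M t ∈ V.restrictScalars ℝ :=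
    Algebra.algebraMap_eq_smul_one (A := M) t ▸ Submodule.smul_mem _ t h1
  exact ⟨⟨algebraMap ℝ M t, hmem⟩, ht⟩

lemma exists_positiveLinearMap_eq (V : Submodule ℂ M) (h1 : 1 ∈ V) (f : V →ₗ[ℂ] ℂ)
    (hf : ∀ v : V, 0 ≤ (v : M) + star (v : M) → 0 ≤ (f v).re) :
    ∃ ω : M →ₚ[ℂ] ℂ, ∀ v : V, ω v = f v := by
  obtain ⟨g, hgf, hg⟩ := exists_linearMap_nonneg_eq_re V h1 f hf
  refine ⟨.mk₀ (Dual.extendRCLike g) fun _ ↦ extendRCLike_nonneg_of_accretiveCone_nonneg hg,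
    fun v ↦ ?_⟩
  change (Dual.extendRCLike g (v : M) : ℂ) = f v
  have hI : g (Complex.I • (v : M)) = (f (Complex.I • v)).re := hgf (Complex.I • v)
  rw [Dual.extendRCLike_apply, RCLike.I_to_complex, hgf v, hI]
  apply Complex.ext <;> simp

end Riesz

lemma sum_smul_mul_star_nonneg {𝕜 R ι : Type*} [RCLike 𝕜] [Ring R] [StarRing R] [PartialOrder R]
    [StarOrderedRing R] [Algebra 𝕜 R] [StarModule 𝕜 R] [Fintype ι] {G : Matrix ι ι 𝕜}
    (hG : G.PosSemidef) (z : ι → R) : 0 ≤ ∑ i, ∑ j, G i j • (z i * star (z j)) := by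
  obtain ⟨m, v, rfl⟩ := Matrix.posSemidef_iff_eq_sum_vecMulVec.mp hG
  have hsum : ∑ i, ∑ j, (∑ k, Matrix.vecMulVec (v k) (star (v k))) i j • (z i * star (z j)) =
      ∑ k, (∑ i, v k i • z i) * star (∑ j, v k j • z j) := by
    simp only [Matrix.sum_apply, Matrix.vecMulVec_apply, Pi.star_apply, Finset.sum_smul, star_sum,
      star_smul, Finset.sum_mul_sum, smul_mul_smul_comm]
    rw [Finset.sum_comm_cycle]
  rw [hsum]
  exact Finset.sum_nonneg fun k _ ↦ mul_star_self_nonneg _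

section Gram

variable {M : Type*} [CStarAlgebra M] [PartialOrder M] [StarOrderedRing M] {ι : Type*}

lemma posSemidef_gram_positiveLinearMap [Finite ι] (ω : M →ₚ[ℂ] ℂ) (c : ι → M) :
    (Matrix.of fun i j ↦ ω (star (c i) * c j)).PosSemidef :=
  Matrix.posSemidef_gram (𝕜 := ℂ) fun i ↦ ω.toPreGNS (c i)

variable [Fintype ι]

/-- The positive map `x ↦ ∑ i, ∑ j, ω (star (b i) * x * b j) • (b i * star (b j))` attached to
a positive functional `ω` and a finite family `b`. When `b` is a trace-orthonormal basis of a
subalgebra `D`, this is a `D`-valued `D`-bimodule map. -/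
noncomputable def gramMap (ω : M →ₚ[ℂ] ℂ) (b : ι → M) : M →ₚ[ℂ] M :=
  .mk₀ (∑ i, ∑ j, (ω.toLinearMap ∘ₗ LinearMap.mulLeftRight ℂ (star (b i), b j)).smulRight
    (b i * star (b j))) fun x hx ↦ by
    obtain ⟨y, rfl⟩ := CStarAlgebra.nonneg_iff_eq_star_mul_self.mp hx
    simpa [mul_assoc] using
      sum_smul_mul_star_nonneg (posSemidef_gram_positiveLinearMap ω fun i ↦ y * b i) b

lemma gramMap_apply (ω : M →ₚ[ℂ] ℂ) (b : ι → M) (x : M) :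
    gramMap ω b x = ∑ i, ∑ j, ω (star (b i) * x * b j) • (b i * star (b j)) := by
  change (∑ i, ∑ j, (ω.toLinearMap ∘ₗ LinearMap.mulLeftRight ℂ (star (b i), b j)).smulRight
    (b i * star (b j)) : M →ₗ[ℂ] M) x = _
  simp

lemma gramMap_mem (ω : M →ₚ[ℂ] ℂ) {D : StarSubalgebra ℂ M} (b : ι → D) (x : M) :
    gramMap ω (fun i ↦ (b i : M)) x ∈ D := by
  rw [gramMap_apply]
  exact sum_mem fun i _ ↦ sum_mem fun j _ ↦
    D.smul_mem (mul_mem (b i).2 (star_mem (b j).2)) _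

variable [DecidableEq ι] {D : StarSubalgebra ℂ M} {b : Basis ι ℂ D}

lemma gramMap_mul_coe (hb : IsTraceDual b fun i ↦ star (b i)) (ω : M →ₚ[ℂ] ℂ) (x : M) (d : D) :
    gramMap ω (fun i ↦ (b i : M)) (x * d) = gramMap ω (fun i ↦ (b i : M)) x * d := by
  simp only [gramMap_apply, Finset.sum_mul]
  refine Finset.sum_congr rfl fun i _ ↦ ?_
  let F : D →ₗ[ℂ] D →ₗ[ℂ] M := LinearMap.mk₂ ℂ
    (fun u v ↦ ω (star (b i : M) * x * u) • ((b i : M) * v))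
    (by simp [mul_add, add_smul]) (by simp [mul_smul]) (by simp [mul_add])
    (by simp [smul_comm (ω _)])
  simpa [F, mul_assoc] using hb.sum_apply_mul F d

lemma gramMap_coe_mul (hb : IsTraceDual b fun i ↦ star (b i)) (ω : M →ₚ[ℂ] ℂ) (d : D) (x : M) :
    gramMap ω (fun i ↦ (b i : M)) (d * x) = d * gramMap ω (fun i ↦ (b i : M)) x := by
  simpa [← map_star] using congr_arg star (gramMap_mul_coe hb ω (star x) (star d))

lemma gramMap_eq_of_forall_apply_eq (hb : IsTraceDual b fun i ↦ star (b i)) {ω : M →ₚ[ℂ] ℂ}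
    {x : M} {y : D} (h : ∀ u v : D, ω (u * x * v) = regularTrace ℂ D (u * y * v)) :
    gramMap ω (fun i ↦ (b i : M)) x = y := by
  have hy : ∑ i, ∑ j, regularTrace ℂ D (star (b i) * y * b j) • (b i * star (b j)) = y := by
    simp_rw [← smul_mul_assoc, mul_assoc]
    rw [Finset.sum_comm]
    simp_rw [← Finset.sum_mul, hb.sum_regularTrace_smul, mul_assoc, ← Finset.mul_sum,
      hb.sum_mul_eq_one, mul_one]
  conv_rhs => rw [← hy]
  simp [gramMap_apply, ← h]

end Gram

section ConditionalExpectation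

variable {M : Type*} [CStarAlgebra M] [PartialOrder M] [StarOrderedRing M]

/-- A positive map `Ψ` is a conditional expectation onto the `*`-subalgebra `D`. Idempotence is not
a field: `Ψ d = d` for `d ∈ D` follows from `map_one` and `map_mul_mul`. -/
structure IsConditionalExpectation (D : StarSubalgebra ℂ M) (Ψ : M →ₚ[ℂ] M) : Prop where
  map_mem : ∀ x, Ψ x ∈ D
  map_one : Ψ 1 = 1
  map_mul_mul : ∀ d ∈ D, ∀ d' ∈ D, ∀ x, Ψ (d * x * d') = d * Ψ x * d'

lemma exists_positiveLinearMap_eq_regularTrace {B : Type*} [Ring B] [Algebra ℂ B]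
    [FiniteDimensional ℂ B] {A : Subalgebra ℂ M} (hA : IsClosed (A : Set M)) (Φ : A →ₐ[ℂ] B) :
    ∃ ω : M →ₚ[ℂ] ℂ, ∀ a : A, ω a = regularTrace ℂ B (Φ a) :=
  exists_positiveLinearMap_eq A.toSubmodule A.one_mem (regularTrace ℂ B ∘ₗ Φ.toLinearMap)
    fun _ ha ↦ re_regularTrace_map_nonneg hA Φ ha

theorem hoffman_rossi_matrix_D_valued_general (D : StarSubalgebra ℂ M) [FiniteDimensional ℂ D]
    (A : Subalgebra ℂ M) (hA : IsClosed (A : Set M)) (hDA : D.toSubalgebra ≤ A) (Φ : A →ₐ[ℂ] D)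
    (hΦ : ∀ d : D, Φ ⟨d, hDA d.2⟩ = d) :
    ∃ Ψ : M →ₚ[ℂ] M, IsConditionalExpectation D Ψ ∧ ∀ a : A, Ψ a = Φ a := by
  have : IsClosed (D : Set M) := D.toSubalgebra.toSubmodule.closed_of_finiteDimensional
  obtain ⟨b, hb⟩ := exists_basis_isTraceDual_star D
  obtain ⟨ω, hω⟩ := exists_positiveLinearMap_eq_regularTrace hA Φ
  have hΨ (a : A) : gramMap ω (fun i ↦ (b i : M)) a = Φ a :=
    gramMap_eq_of_forall_apply_eq hb fun u v ↦ by
      simpa [hΦ] using hω (⟨u, hDA u.2⟩ * a * ⟨v, hDA v.2⟩)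
  refine ⟨gramMap ω fun i ↦ (b i : M), ⟨gramMap_mem ω b, ?_, fun d hd d' hd' x ↦ ?_⟩, hΨ⟩
  · simpa using hΨ 1
  · rw [gramMap_mul_coe hb ω _ ⟨d', hd'⟩, gramMap_coe_mul hb ω ⟨d, hd⟩]

end ConditionalExpectation

/-- **Finite-dimensional `D`-valued Hoffman–Rossi theorem.**  Let `D ⊆ A ⊆ Mₙ(ℂ)` where `A` is
a unital subalgebra and `D` a unital `*`-subalgebra contained in `A`.  Every homomorphism
`Φ : A → D` restricting to the identity on `D` extends to a conditional expectation
`Ψ : Mₙ(ℂ) → D`: a positive unital linear map onto `D` extending `Φ` which is a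
`D`-bimodule map. -/
theorem hoffman_rossi_matrix_D_valued {n : ℕ}
    (D A : Subalgebra ℂ (Matrix (Fin n) (Fin n) ℂ))
    (hDA : D ≤ A)
    (hstar : ∀ d ∈ D, star d ∈ D)
    (Φ : A →ₗ[ℂ] Matrix (Fin n) (Fin n) ℂ)
    (hrange : ∀ a : A, Φ a ∈ D)
    (hmul : ∀ x y : A, Φ (x * y) = Φ x * Φ y)
    (hid : ∀ d (hd : d ∈ D), Φ ⟨d, hDA hd⟩ = d) :
    ∃ Ψ : Matrix (Fin n) (Fin n) ℂ →ₗ[ℂ] Matrix (Fin n) (Fin n) ℂ,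
      (∀ x, Ψ x ∈ D) ∧
      (∀ a : A, Ψ (a : Matrix (Fin n) (Fin n) ℂ) = Φ a) ∧
      (∀ x : Matrix (Fin n) (Fin n) ℂ, x.PosSemidef → (Ψ x).PosSemidef) ∧
      Ψ 1 = 1 ∧
      (∀ d d' x : Matrix (Fin n) (Fin n) ℂ, d ∈ D → d' ∈ D →
        Ψ (d * x * d') = d * Ψ x * d') := by
  open scoped MatrixOrder Matrix.Norms.L2Operator in
  let D' : StarSubalgebra ℂ (Matrix (Fin n) (Fin n) ℂ) := { D with star_mem' := hstar _ }
  let Φ' : A →ₐ[ℂ] D' :=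
    (AlgHom.ofLinearMap Φ (hid 1 D.one_mem) hmul).codRestrict D'.toSubalgebra hrange
  have : FiniteDimensional ℂ D' := inferInstanceAs (FiniteDimensional ℂ D)
  obtain ⟨Ψ, hΨ, hΨΦ⟩ := hoffman_rossi_matrix_D_valued_general D' A
    A.toSubmodule.closed_of_finiteDimensional hDA Φ' fun d ↦ Subtype.ext (hid d d.2)
  exact ⟨Ψ.toLinearMap, hΨ.map_mem, hΨΦ,
    fun x hx ↦ Matrix.nonneg_iff_posSemidef.mp (map_nonneg Ψ hx.nonneg), hΨ.map_one,
    fun d d' x hd hd' ↦ hΨ.map_mul_mul d hd d' hd' x⟩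
end

section
/- (Failure of the Hoffman–Rossi theorem for non-selfadjoint range.) Let L^∞ = L^∞([0,1]; ℂ) with Lebesgue measure, let 1 denote the constant function 1 and T the identity function t ↦ t in L^∞, and let M = M₂(L^∞) be the algebra of 2×2 matrices with entries in L^∞. Then there is no linear map R : M₂(L^∞) → M₂(ℂ) satisfying all three of the following: (i) R is positive, i.e. R(y*·y) is a positive semidefinite matrix for every y ∈ M₂(L^∞), where y* is the conjugate-transpose (entrywise complex conjugate and transpose); (ii) R extends the homomorphism Φ, i.e. for all λ, μ, a, b ∈ ℂ, R of the upper-triangular matrix with (1,1) entry λ·1, (1,2) entry a·1 + b·T, (2,1) entry 0, and (2,2) entry μ·1, equals the matrix with entries ((λ, a + b), (0, μ)); (iii) the (1,2)-corner functional of R is weak*-continuous, i.e. there exists g ∈ L¹([0,1]; ℂ) such that for every x ∈ L^∞, the (1,2) entry of R applied to the matrix with (1,2) entry x and all other entries 0 equals ∫_{[0,1]} x·g dt. -/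
open MeasureTheory
open scoped ComplexOrder

set_option synthInstance.maxHeartbeats 1000000
set_option maxHeartbeats 1000000

/-- Lebesgue measure on `[0,1]`. -/
noncomputable def lebesgue01 : Measure ℝ := volume.restrict (Set.Icc (0:ℝ) 1)

/-! Suppose `R` exists, and write `φ x = ∫ x g` for its corner functional. Positivity of `R` and
`R 1 = 1` force `|φ u| ≤ 1` for unimodular `u`, because `[1, u; ū, 1]` is positive. For
`u = ḡ / |g|` this reads `∫ |g| ≤ 1`. On the other hand `w = (1 + T) / 2` satisfies `φ w = 1`,
while `|w| < 1` almost everywhere by strict convexity of the disc, so that `1 = |∫ w g| < ∫ |g|`. -/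

section Matrix

lemma two_mul_norm_apply_le_of_posSemidef {𝕜 n : Type*} [RCLike 𝕜] {N : Matrix n n 𝕜}
    (hN : N.PosSemidef) (i j : n) : 2 * ‖N i j‖ ≤ RCLike.re (N i i) + RCLike.re (N j j) := by
  obtain ⟨hi, hi_im⟩ := RCLike.nonneg_iff.1 (hN.diag_nonneg (i := i))
  obtain ⟨hj, -⟩ := RCLike.nonneg_iff.1 (hN.diag_nonneg (i := j))
  have hsq : ‖N i j‖ ^ 2 ≤ RCLike.re (N i i) * RCLike.re (N j j) := by
    have hdet : 0 ≤ (N.submatrix ![i, j] ![i, j]).det := (hN.submatrix _).det_nonneg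
    have hji : N j i = star (N i j) := (hN.1.apply j i).symm
    have hre := (RCLike.nonneg_iff.1 hdet).1
    simp only [Matrix.det_fin_two, Matrix.submatrix_apply, Matrix.cons_val_zero,
      Matrix.cons_val_one, hji, RCLike.star_def, RCLike.mul_conj, map_sub, RCLike.mul_re, hi_im,
      ← RCLike.ofReal_pow, RCLike.ofReal_re] at hre
    linarith
  refine le_of_sq_le_sq ?_ (add_nonneg hi hj)
  nlinarith [sq_nonneg (RCLike.re (N i i) - RCLike.re (N j j))]

lemma two_mul_norm_apply_le_of_forall_posSemidef {n : Type*} {D E F : Matrix n n ℂ}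
    (h : ∀ c : ℂ, ‖c‖ = 1 → (D + c • E + star c • F).PosSemidef) (i j : n) :
    2 * ‖E i j‖ ≤ (D i i).re + (D j j).re := by
  let q (c : ℂ) : Matrix n n ℂ := D + c • E + star c • F
  have hq (c : ℂ) (hc : ‖c‖ = 1) : 2 * ‖q c i j‖ ≤ (q c i i).re + (q c j j).re :=
    two_mul_norm_apply_le_of_posSemidef (h c hc) i j
  -- Sums over the fourth roots of unity `c`: weights `1` isolate `D`, weights `c̄` isolate `E`.
  have hD : (4 : ℂ) • D = q 1 + q Complex.I + q (-1) + q (-Complex.I) := by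
    simp only [q, Complex.star_def, map_one, map_neg, Complex.conj_I]
    module
  have hE : (4 : ℂ) • E =
      q 1 - Complex.I • q Complex.I - q (-1) + Complex.I • q (-Complex.I) := by
    simp only [q, Complex.star_def, map_one, map_neg, Complex.conj_I, smul_add, smul_smul,
      mul_neg, Complex.I_mul_I]
    module
  have hD_re (k : n) : 4 * (D k k).re = (q 1 k k).re + (q Complex.I k k).re +
      (q (-1) k k).re + (q (-Complex.I) k k).re := by
    simpa using congr(Complex.re ($hD k k))
  have hE_le : 4 * ‖E i j‖ ≤ ‖q 1 i j‖ + ‖q Complex.I i j‖ + ‖q (-1) i j‖ +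
      ‖q (-Complex.I) i j‖ := by
    calc 4 * ‖E i j‖ = ‖q 1 i j - Complex.I * q Complex.I i j - q (-1) i j +
          Complex.I * q (-Complex.I) i j‖ := by
          simpa using congr(‖$hE i j‖)
      _ ≤ _ := by
        refine (norm_add_le_of_le (norm_sub_le_of_le (norm_sub_le _ _) le_rfl) le_rfl).trans_eq ?_
        simp
  linarith [hq 1 (by simp), hq Complex.I (by simp), hq (-1) (by simp), hq (-Complex.I) (by simp),
    hD_re i, hD_re j]

lemma star_mul_self_fin_two_of_snd_row_eq_zero {A : Type*} [Semiring A] [StarRing A] (a b : A) :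
    star !![a, b; 0, 0] * !![a, b; 0, 0] =
      !![star a * a, star a * b; star b * a, star b * b] := by
  ext i j
  fin_cases i <;> fin_cases j <;> simp [Matrix.mul_apply, Matrix.star_apply]

lemma two_mul_norm_map_corner_apply_le {A n : Type*} [AddCommGroup A] [StarAddMonoid A]
    [Module ℂ A] [StarModule ℂ A] (R : Matrix (Fin 2) (Fin 2) A →ₗ[ℂ] Matrix n n ℂ) {a b u : A}
    (hR : ∀ c : ℂ, ‖c‖ = 1 → (R !![a, c • u; star (c • u), b]).PosSemidef) (i j : n) :
    2 * ‖R !![0, u; 0, 0] i j‖ ≤ (R !![a, 0; 0, b] i i).re + (R !![a, 0; 0, b] j j).re := by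
  refine two_mul_norm_apply_le_of_forall_posSemidef (F := R !![0, 0; star u, 0])
    (fun c hc ↦ ?_) i j
  have hsplit : !![a, c • u; star (c • u), b] =
      !![a, 0; 0, b] + c • !![0, u; 0, 0] + star c • !![0, 0; star u, 0] := by
    ext k l
    fin_cases k <;> fin_cases l <;> simp
  simpa only [hsplit, map_add, map_smul] using hR c hc

end Matrix

section Measure

variable {Ω : Type*} [MeasurableSpace Ω] {μ : Measure Ω}

lemma exists_norm_eq_one_mul_eq_norm {g : Ω → ℂ} (hg : AEStronglyMeasurable g μ) :
    ∃ u : Ω → ℂ, AEStronglyMeasurable u μ ∧ (∀ t, ‖u t‖ = 1) ∧ ∀ t, u t * g t = ‖g t‖ := by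
  refine ⟨fun t ↦ Complex.exp ((-(g t).arg : ℝ) * Complex.I), ?_, fun t ↦ ?_, fun t ↦ ?_⟩
  · have := hg.aemeasurable
    exact AEMeasurable.aestronglyMeasurable (by fun_prop)
  · exact Complex.norm_exp_ofReal_mul_I _
  · calc Complex.exp ((-(g t).arg : ℝ) * Complex.I) * g t
        = Complex.exp ((-(g t).arg : ℝ) * Complex.I) *
            (‖g t‖ * Complex.exp ((g t).arg * Complex.I)) := by
          rw [Complex.norm_mul_exp_arg_mul_I]
      _ = ‖g t‖ := by
          rw [mul_left_comm, ← Complex.exp_add]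
          simp

lemma integral_norm_le_of_forall_norm_eq_one {g : Ω → ℂ} (hg : AEStronglyMeasurable g μ) {C : ℝ}
    (h : ∀ u : Ω → ℂ, AEStronglyMeasurable u μ → (∀ t, ‖u t‖ = 1) → ‖∫ t, u t * g t ∂μ‖ ≤ C) :
    ∫ t, ‖g t‖ ∂μ ≤ C := by
  obtain ⟨u, hu, hu_norm, hug⟩ := exists_norm_eq_one_mul_eq_norm hg
  have hle := h u hu hu_norm
  simp only [hug, integral_complex_ofReal, Complex.norm_real] at hle
  exact (le_abs_self _).trans hle

lemma norm_integral_smul_lt_integral_norm {𝕜 E : Type*} [NormedField 𝕜] [NormedAddCommGroup E]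
    [NormedSpace ℝ E] [NormedSpace 𝕜 E] {w : Ω → 𝕜} {g : Ω → E}
    (hw : AEStronglyMeasurable w μ) (hw_lt : ∀ᵐ t ∂μ, ‖w t‖ < 1) (hg : Integrable g μ)
    (hg0 : ¬ g =ᵐ[μ] 0) : ‖∫ t, w t • g t ∂μ‖ < ∫ t, ‖g t‖ ∂μ := by
  have hle : ∀ᵐ t ∂μ, ‖w t • g t‖ ≤ ‖g t‖ := by
    filter_upwards [hw_lt] with t ht
    simpa [norm_smul] using mul_le_of_le_one_left (norm_nonneg (g t)) ht.le
  have hwg : Integrable (fun t ↦ w t • g t) μ := hg.mono (hw.smul hg.aestronglyMeasurable) hle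
  refine (norm_integral_le_integral_norm _).trans_lt <|
    (integral_mono_ae hwg.norm hg.norm hle).lt_of_ne fun heq ↦ hg0 ?_
  filter_upwards [hw_lt, (integral_eq_iff_of_ae_le hwg.norm hg.norm hle).1 heq] with t hwt hgt
  by_contra hne
  exact (mul_lt_of_lt_one_left (norm_pos_iff.2 hne) hwt).ne (by simpa [norm_smul] using hgt)

lemma norm_corner_apply_le_one_of_norm_eq_one {n : Type*} [DecidableEq n]
    {R : Matrix (Fin 2) (Fin 2) (Ω → ℂ) →ₗ[ℂ] Matrix n n ℂ}
    (hpos : ∀ y : Matrix (Fin 2) (Fin 2) (Ω → ℂ),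
      (∀ i j, MemLp (y i j) ⊤ μ) → (R (star y * y)).PosSemidef)
    (hone : R !![1, 0; 0, 1] = 1) {u : Ω → ℂ} (hu : AEStronglyMeasurable u μ)
    (hu_norm : ∀ t, ‖u t‖ = 1) (i j : n) : ‖R !![0, u; 0, 0] i j‖ ≤ 1 := by
  have hpsd (c : ℂ) (hc : ‖c‖ = 1) : (R !![1, c • u; star (c • u), 1]).PosSemidef := by
    have hcu : star (c • u) * (c • u) = 1 := by
      ext t
      simpa [hc, hu_norm] using RCLike.conj_mul (c * u t)
    have hmem : MemLp (c • u) ⊤ μ :=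
      memLp_top_of_bound (hu.const_smul c) 1 (.of_forall fun t ↦ by simp [hc, hu_norm])
    have hy := hpos !![1, c • u; 0, 0] fun k l ↦ by
      fin_cases k <;> fin_cases l
      exacts [memLp_top_const 1, hmem, .zero, .zero]
    rwa [star_mul_self_fin_two_of_snd_row_eq_zero, hcu, star_one, one_mul, one_mul, mul_one] at hy
  have hle := two_mul_norm_map_corner_apply_le R hpsd i j
  simp only [hone, Matrix.one_apply_eq, Complex.one_re] at hle
  linarith

end Measure

theorem no_positive_weakstar_extension_nonselfadjoint_range_general {Ω : Type*}
    [MeasurableSpace Ω] {μ : Measure Ω} {T : Ω → ℂ} (hT : AEStronglyMeasurable T μ)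
    (hT_le : ∀ᵐ t ∂μ, ‖T t‖ ≤ 1) (hT_ne : ∀ᵐ t ∂μ, T t ≠ 1) :
    ¬ ∃ R : Matrix (Fin 2) (Fin 2) (Ω → ℂ) →ₗ[ℂ] Matrix (Fin 2) (Fin 2) ℂ,
        (∀ y : Matrix (Fin 2) (Fin 2) (Ω → ℂ),
          (∀ i j, MemLp (y i j) ⊤ μ) → (R (star y * y)).PosSemidef) ∧
        (∀ lam mu a b : ℂ,
          R !![fun _ => lam, fun t => a + b * T t; 0, fun _ => mu] = !![lam, a + b; 0, mu]) ∧
        (∃ g : Ω → ℂ, Integrable g μ ∧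
          ∀ x : Ω → ℂ, MemLp x ⊤ μ → R !![0, x; 0, 0] 0 1 = ∫ t, x t * g t ∂μ) := by
  rintro ⟨R, hpos, hext, g, hg, hR⟩
  have hone : R !![1, 0; 0, 1] = 1 := by
    simpa [Matrix.one_fin_two, Pi.one_def, Pi.zero_def] using hext 1 1 0 0
  have hg_le : ∫ t, ‖g t‖ ∂μ ≤ 1 := by
    refine integral_norm_le_of_forall_norm_eq_one hg.aestronglyMeasurable fun u hu hu_norm ↦ ?_
    rw [← hR u (memLp_top_of_bound hu 1 (.of_forall fun t ↦ (hu_norm t).le))]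
    exact norm_corner_apply_le_one_of_norm_eq_one hpos hone hu hu_norm 0 1
  set w : Ω → ℂ := fun t ↦ 1 / 2 + 1 / 2 * T t
  have hw : AEStronglyMeasurable w μ := by fun_prop
  have hw_lt : ∀ᵐ t ∂μ, ‖w t‖ < 1 := by
    filter_upwards [hT_le, hT_ne] with t hle hne
    simpa [w] using norm_combo_lt_of_ne (norm_one (α := ℂ)).le hle hne.symm
      one_half_pos one_half_pos (add_halves 1)
  have hφw : ∫ t, w t * g t ∂μ = 1 := by
    rw [← hR w (memLp_top_of_bound hw 1 (hw_lt.mono fun _ ↦ le_of_lt))]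
    exact congr($(hext 0 0 (1 / 2) (1 / 2)) 0 1).trans (add_halves 1)
  have hg0 : ¬ g =ᵐ[μ] 0 := fun h0 ↦ one_ne_zero <|
    hφw.symm.trans <| integral_eq_zero_of_ae (h0.mono fun t ht ↦ by simp [ht])
  have hlt := norm_integral_smul_lt_integral_norm hw hw_lt hg hg0
  simp only [smul_eq_mul, hφw, norm_one] at hlt
  exact hlt.not_ge hg_le

lemma ae_norm_ofReal_le_one_lebesgue01 : ∀ᵐ t : ℝ ∂lebesgue01, ‖(t : ℂ)‖ ≤ 1 :=
  ae_restrict_of_forall_mem measurableSet_Icc fun t ht ↦ by simpa [abs_of_nonneg ht.1] using ht.2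

lemma ae_ofReal_ne_one_lebesgue01 : ∀ᵐ t : ℝ ∂lebesgue01, (t : ℂ) ≠ 1 :=
  ae_restrict_of_ae <| (Measure.ae_ne volume 1).mono fun _ ht ↦ Complex.ofReal_ne_one.2 ht

/-- **Failure of the Hoffman–Rossi theorem for non-selfadjoint range.**  With
`L^∞ = L^∞([0,1]; ℂ)` realized by functions, `1` the constant function and `T : t ↦ t`, there
is no linear map `R : M₂(L^∞) → M₂(ℂ)` which (i) is positive, i.e. sends elements `y*·y` with
essentially bounded measurable entries to positive semidefinite matrices, (ii) extends the
homomorphism `Φ` of `evaluation at 1` on upper-triangular matrices with scalar diagonal and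
`(1,2)` entry in `span{1, T}`, and (iii) has weak*-continuous `(1,2)`-corner functional, i.e.
given on the `(1,2)` corner by integration against some `g ∈ L¹([0,1]; ℂ)`. -/
theorem no_positive_weakstar_extension_nonselfadjoint_range :
    ¬ ∃ R : Matrix (Fin 2) (Fin 2) (ℝ → ℂ) →ₗ[ℂ] Matrix (Fin 2) (Fin 2) ℂ,
        (∀ y : Matrix (Fin 2) (Fin 2) (ℝ → ℂ),
          (∀ i j, MemLp (y i j) ⊤ lebesgue01) → (R (star y * y)).PosSemidef) ∧
        (∀ lam mu a b : ℂ,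
          R !![fun _ => lam, fun t : ℝ => a + b * (t : ℂ); 0, fun _ => mu]
            = !![lam, a + b; 0, mu]) ∧
        (∃ g : ℝ → ℂ, Integrable g lebesgue01 ∧
          ∀ x : ℝ → ℂ, MemLp x ⊤ lebesgue01 →
            R !![0, x; 0, 0] 0 1 = ∫ t, x t * g t ∂lebesgue01) :=
  no_positive_weakstar_extension_nonselfadjoint_range_general
    (by fun_prop) ae_norm_ofReal_le_one_lebesgue01 ae_ofReal_ne_one_lebesgue01
end
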